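/- Eigenfunctions of the fractional Laplacian on ℝⁿ (Proposition A.1, weak Fourier formulation): Let n ≥ 2 be an integer, s ∈ (0, n), k ≥ 0 an integer, α = (n−1)/2 and μ = (n−s)/2. Define the Gegenbauer polynomial P_k(z) := Σ_{j=0}^{⌊k/2⌋} (−1)^j Γ(α + k − j) / ( Γ(α) · j! · (k−2j)! ) · (2z)^{k−2j} and f_k(x) := P_k( (1−|x|²)/(1+|x|²) ) · (1+|x|²)^{−μ} for x ∈ ℝⁿ. Then for every Schwartz function φ on ℝⁿ, ∫_{ℝⁿ} f_k(x) · 𝓕^{−1}[ (2π|ξ|)^s 𝓕φ(ξ) ](x) dx = λ_k ∫_{ℝⁿ} f_k(x) (1+|x|²)^{−s} φ(x) dx, where λ_k = 2^s Γ(k + (n+s)/2) / Γ(k + (n−s)/2); both integrals converge absolutely. -/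

import Mathlib

open MeasureTheory Real SchwartzMap
open scoped FourierTransform

/-- The Gegenbauer polynomial `C_k^{(α)}` with parameter `α = (n−1)/2`, via its
explicit finite-sum formula. -/
noncomputable def gegenbauerP (n k : ℕ) (z : ℝ) : ℝ :=
  ∑ j ∈ Finset.range (k / 2 + 1),
    (-1 : ℝ) ^ j * Gamma (((n : ℝ) - 1) / 2 + (k : ℝ) - (j : ℝ)) /
        (Gamma (((n : ℝ) - 1) / 2) * (Nat.factorial j : ℝ) *
          (Nat.factorial (k - 2 * j) : ℝ)) *
      (2 * z) ^ (k - 2 * j)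

/-- The eigenfunction `f_k(x) = C_k^{(α)}((1−|x|²)/(1+|x|²)) (1+|x|²)^{−μ}` with
`μ = (n−s)/2`. -/
noncomputable def eigenFun (n k : ℕ) (s : ℝ) (x : EuclideanSpace ℝ (Fin n)) : ℝ :=
  gegenbauerP n k ((1 - ‖x‖ ^ 2) / (1 + ‖x‖ ^ 2)) *
    (1 + ‖x‖ ^ 2) ^ (-(((n : ℝ) - s) / 2))

/-- Bessel-type integral. -/
noncomputable def besI (ν r : ℝ) : ℝ :=
  ∫ t in Set.Ioi (0:ℝ), t ^ (ν - 1) * exp (-t - r ^ 2 / t)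

lemma rpow_le_const_mul_exp {p x : ℝ} (hp : 0 < p) (hx : 0 ≤ x) : x ^ p ≤ p ^ p * exp x := by
  have h1 : x / p ≤ exp (x / p) := by linarith [add_one_le_exp (x / p)]
  have h2 : x ≤ p * exp (x / p) := by
    rw [div_le_iff₀ hp] at h1; linarith
  calc x ^ p ≤ (p * exp (x / p)) ^ p := rpow_le_rpow hx h2 hp.le
    _ = p ^ p * exp x := by
      rw [mul_rpow hp.le (exp_pos _).le, ← exp_mul]
      congr 2; field_simp

lemma besI_meas (ν r : ℝ) :
    Measurable (fun t : ℝ => t ^ (ν - 1) * exp (-t - r ^ 2 / t)) := by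
  fun_prop

lemma besI_integrableOn (ν : ℝ) {r : ℝ} (hr : 0 < r) :
    IntegrableOn (fun t : ℝ => t ^ (ν - 1) * exp (-t - r ^ 2 / t)) (Set.Ioi 0) := by
  set p : ℝ := |ν| + 1 with hpdef
  have hp : 0 < p := by positivity
  have hνp : 0 < ν + p := by have := neg_abs_le ν; linarith
  have hG := (GammaIntegral_convergent hνp).const_mul (p ^ p * (r ^ 2) ^ (-p))
  refine Integrable.mono' hG (besI_meas ν r).aestronglyMeasurable ?_
  refine (ae_restrict_iff' measurableSet_Ioi).2 (Filter.Eventually.of_forall fun t ht => ?_)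
  have ht : 0 < t := ht
  have hr2 : 0 < r ^ 2 := by positivity
  rw [norm_of_nonneg (by positivity)]
  have h := rpow_le_const_mul_exp hp (div_pos hr2 ht).le
  have h3 : exp (-(r ^ 2 / t)) ≤ p ^ p * ((r ^ 2) ^ (-p) * t ^ p) := by
    rw [div_rpow hr2.le ht.le] at h
    rw [exp_neg, rpow_neg hr2.le]
    have hA : 0 < (r ^ 2) ^ p := by positivity
    have hB : 0 < t ^ p := by positivity
    have hE := exp_pos (r ^ 2 / t)
    rw [inv_le_iff_one_le_mul₀ hE]
    rw [div_le_iff₀ hB] at h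
    calc (1:ℝ) = (r ^ 2) ^ p * ((r ^ 2) ^ p)⁻¹ := (mul_inv_cancel₀ hA.ne').symm
      _ ≤ (p ^ p * exp (r ^ 2 / t) * t ^ p) * ((r ^ 2) ^ p)⁻¹ := by gcongr
      _ = _ := by ring
  have e1 : exp (-t - r ^ 2 / t) = exp (-t) * exp (-(r ^ 2 / t)) := by
    rw [← exp_add]; ring_nf
  have e2 : t ^ (ν + p - 1) = t ^ (ν - 1) * t ^ p := by
    rw [← rpow_add ht]; ring_nf
  rw [e1, e2]
  calc t ^ (ν - 1) * (exp (-t) * exp (-(r ^ 2 / t)))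
      ≤ t ^ (ν - 1) * (exp (-t) * (p ^ p * ((r ^ 2) ^ (-p) * t ^ p))) := by gcongr
    _ = _ := by ring

lemma besI_hasDerivAt (ν : ℝ) {r : ℝ} (hr : 0 < r) :
    HasDerivAt (besI ν) (-2 * r * besI (ν - 1) r) r := by
  have hr2 : 0 < r / 2 := by positivity
  have key := hasDerivAt_integral_of_dominated_loc_of_deriv_le
    (μ := volume.restrict (Set.Ioi (0:ℝ)))
    (F := fun r t => t ^ (ν - 1) * exp (-t - r ^ 2 / t))
    (F' := fun r t => -2 * r * (t ^ (ν - 1 - 1) * exp (-t - r ^ 2 / t)))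
    (x₀ := r) (s := Metric.ball r (r/2))
    (bound := fun t => 3 * r * (t ^ (ν - 1 - 1) * exp (-t - (r/2) ^ 2 / t)))
    (Metric.ball_mem_nhds _ hr2)
    (Filter.Eventually.of_forall fun x => (besI_meas ν x).aestronglyMeasurable)
    (besI_integrableOn ν hr)
    (by exact ((besI_meas (ν-1) r).const_mul _).aestronglyMeasurable)
    ?_ ((besI_integrableOn (ν-1) hr2).const_mul _) ?_
  · have := key.2
    rw [integral_const_mul] at this
    exact this
  · refine (ae_restrict_iff' measurableSet_Ioi).2 (Filter.Eventually.of_forall fun t ht x hx => ?_)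
    have ht : 0 < t := ht
    rw [Metric.mem_ball, dist_eq, abs_lt] at hx
    have hx0 : r / 2 ≤ x := by linarith [hx.1]
    have hx1 : x ≤ 3 / 2 * r := by linarith [hx.2]
    have hxp : 0 < x := by linarith
    rw [norm_mul, norm_mul, norm_of_nonneg (r := t ^ (ν - 1 - 1) * _) (by positivity),
      norm_of_nonneg hxp.le]
    have : ‖(-2:ℝ)‖ = 2 := by norm_num
    rw [this]
    have : 2 * x ≤ 3 * r := by linarith
    gcongr
  · refine (ae_restrict_iff' measurableSet_Ioi).2 (Filter.Eventually.of_forall fun t ht x hx => ?_)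
    have ht : 0 < t := ht
    have h1 : HasDerivAt (fun x : ℝ => -t - x ^ 2 / t) (-(2 * x / t)) x := by
      have := ((hasDerivAt_pow 2 x).div_const t).const_sub (-t)
      refine this.congr_deriv ?_
      simp
    have h2 := (h1.exp).const_mul (t ^ (ν - 1))
    refine h2.congr_deriv ?_
    rw [rpow_sub_one ht.ne' (ν - 1)]
    field_simp

lemma besI_symm (ν : ℝ) {r : ℝ} (hr : 0 < r) :
    besI (-ν) r = r ^ (-(2 * ν)) * besI ν r := by
  have hr2 : 0 < r ^ 2 := by positivity
  unfold besI
  have h1 := integral_comp_rpow_Ioi (fun t : ℝ => t ^ (-ν - 1) * exp (-t - r ^ 2 / t))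
    (p := -1) (by norm_num)
  have h2 := integral_comp_mul_left_Ioi
    (fun x : ℝ => (|(-1:ℝ)| * x ^ ((-1:ℝ) - 1)) • ((x ^ (-1:ℝ)) ^ (-ν - 1) *
      exp (-(x ^ (-1:ℝ)) - r ^ 2 / (x ^ (-1:ℝ))))) 0 (b := (r ^ 2)⁻¹) (by positivity)
  rw [mul_zero, h1] at h2
  rw [inv_inv, smul_eq_mul] at h2
  have h3 : ∫ t in Set.Ioi (0:ℝ), t ^ (-ν - 1) * exp (-t - r ^ 2 / t) = (r^2)⁻¹ * (r ^ 2 * ∫ t in Set.Ioi (0:ℝ), t ^ (-ν - 1) * exp (-t - r ^ 2 / t)) := by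
    field_simp
  rw [h3, ← h2, ← integral_const_mul, ← integral_const_mul]
  refine setIntegral_congr_fun measurableSet_Ioi fun t ht => ?_
  have ht : 0 < t := ht
  simp only [abs_neg, abs_one, one_mul, smul_eq_mul]
  have hb : 0 < (r ^ 2)⁻¹ * t := by positivity
  have e : ((r ^ 2)⁻¹ * t) ^ (-1:ℝ) = r ^ 2 / t := by
    rw [rpow_neg_one]; field_simp
  rw [e]
  have e2 : -(r ^ 2 / t) - r ^ 2 / (r ^ 2 / t) = -t - r ^ 2 / t := by
    field_simp; ring
  rw [e2]
  have e3 : (r ^ 2 / t) ^ (-ν - 1) = ((r ^ 2)⁻¹ * t) ^ (ν + 1) := by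
    rw [show (r ^ 2)⁻¹ * t = (r ^ 2 / t)⁻¹ by field_simp, inv_rpow (by positivity),
      ← rpow_neg (by positivity)]
    ring_nf
  rw [e3]
  have e4 : ((r ^ 2)⁻¹ * t) ^ ((-1:ℝ) - 1) * (((r ^ 2)⁻¹ * t) ^ (ν + 1)) = ((r ^ 2)⁻¹ * t) ^ (ν - 1) := by
    rw [← rpow_add hb]; ring_nf
  have e5 : (r ^ 2)⁻¹ * ((r ^ 2)⁻¹) ^ (ν - 1) = r ^ (-(2 * ν)) := by
    rw [mul_comm, ← rpow_add_one (by positivity), inv_rpow hr2.le, ← rpow_natCast r 2, ← rpow_mul hr.le,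
      ← rpow_neg hr.le]
    push_cast; ring_nf
  rw [← e5, ← mul_assoc (_ ^ ((-1:ℝ) - 1)), e4, mul_rpow (by positivity) ht.le]
  ring

lemma besI_rec (ν : ℝ) {r : ℝ} (hr : 0 < r) :
    besI (ν + 1) r = ν * besI ν r + r ^ 2 * besI (ν - 1) r := by
  have h1 := besI_hasDerivAt (-ν) hr
  have h2 : HasDerivAt (fun x => x ^ (-(2 * ν)) * besI ν x)
      ((-(2*ν)) * r ^ (-(2 * ν) - 1) * besI ν r + r ^ (-(2 * ν)) * (-2 * r * besI (ν - 1) r)) r :=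
    (hasDerivAt_rpow_const (Or.inl hr.ne')).mul (besI_hasDerivAt ν hr)
  have h3 : besI (-ν) =ᶠ[nhds r] (fun x => x ^ (-(2 * ν)) * besI ν x) := by
    filter_upwards [lt_mem_nhds hr] with x hx using besI_symm ν hx
  have h4 := (h2.congr_of_eventuallyEq h3).unique h1
  rw [show -ν - 1 = -(ν + 1) by ring, besI_symm (ν + 1) hr] at h4
  have e1 : r ^ (-(2 * ν)) = r ^ (-(2 * (ν + 1))) * r ^ 2 := by
    rw [← rpow_natCast r 2, ← rpow_add hr]; push_cast; ring_nf
  have e2 : r ^ (-(2 * ν) - 1) = r ^ (-(2 * (ν + 1))) * r := by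
    rw [← rpow_add_one hr.ne']; ring_nf
  rw [e1, e2] at h4
  have hA : 0 < r ^ (-(2 * (ν + 1))) := by positivity
  have : (-2 * r * r ^ (-(2 * (ν + 1)))) * (besI (ν + 1) r - (ν * besI ν r + r ^ 2 * besI (ν - 1) r)) = 0 := by
    linear_combination -h4
  have h0 : (-2 * r * r ^ (-(2 * (ν + 1)))) ≠ 0 := by
    have := (mul_pos hr hA).ne'
    simp [hr.ne', hA.ne']
  linarith [(mul_eq_zero.1 this).resolve_left h0]

lemma besI_hasDerivAt' (ν : ℝ) {r : ℝ} (hr : 0 < r) :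
    HasDerivAt (besI ν) ((2 * ν * besI ν r - 2 * besI (ν + 1) r) / r) r := by
  refine (besI_hasDerivAt ν hr).congr_deriv ?_
  rw [besI_rec ν hr]
  field_simp; ring

lemma besI_nonneg (ν r : ℝ) : 0 ≤ besI ν r :=
  setIntegral_nonneg measurableSet_Ioi fun t ht => by
    have : 0 < t := ht
    positivity

lemma besI_le_Gamma {ν : ℝ} (hν : 0 < ν) {r : ℝ} (hr : 0 < r) : besI ν r ≤ Gamma ν := by
  rw [Gamma_eq_integral hν]
  refine setIntegral_mono_on (besI_integrableOn ν hr) (GammaIntegral_convergent hν)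
    measurableSet_Ioi fun t ht => ?_
  have ht : 0 < t := ht
  rw [mul_comm]
  have : -t - r ^ 2 / t ≤ -t := by
    have : 0 ≤ r ^ 2 / t := by positivity
    linarith
  gcongr

lemma besI_bound (j : ℕ) {s : ℝ} (hs : 0 < s) :
    ∃ C : ℝ, ∀ r : ℝ, 0 < r → r ^ s * besI (j - s / 2) r ≤ C := by
  rcases Nat.eq_zero_or_pos j with rfl | hj
  · refine ⟨Gamma (s / 2), fun r hr => ?_⟩
    have h := besI_symm (s / 2) hr
    rw [show ((0:ℕ):ℝ) - s / 2 = -(s / 2) by simp, h, ← mul_assoc, ← rpow_add hr]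
    rw [show s + -(2 * (s / 2)) = 0 by ring, rpow_zero, one_mul]
    exact besI_le_Gamma (by positivity) hr
  · have hj' : (0:ℝ) < j := by exact_mod_cast hj
    refine ⟨(s/2) ^ (s/2) * Gamma j, fun r hr => ?_⟩
    rw [Gamma_eq_integral hj', besI, ← integral_const_mul, ← integral_const_mul]
    refine setIntegral_mono_on ((besI_integrableOn _ hr).const_mul _)
      ((GammaIntegral_convergent hj').const_mul _) measurableSet_Ioi fun t ht => ?_
    have ht : 0 < t := ht
    have hr2 : 0 < r ^ 2 := by positivity
    have h := rpow_le_const_mul_exp (p := s/2) (by positivity) (div_pos hr2 ht).le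
    have e1 : exp (-t - r ^ 2 / t) = exp (-t) * exp (-(r ^ 2 / t)) := by
      rw [← exp_add]; ring_nf
    have e2 : r ^ s * t ^ ((j:ℝ) - s / 2 - 1) = (r ^ 2 / t) ^ (s / 2) * t ^ ((j:ℝ) - 1) := by
      rw [div_rpow hr2.le ht.le, ← rpow_natCast r 2, ← rpow_mul hr.le,
        show (j:ℝ) - s / 2 - 1 = ((j:ℝ) - 1) - s/2 by ring, rpow_sub ht]
      rw [show ((2:ℕ):ℝ) * (s / 2) = s by push_cast; ring]
      field_simp
    rw [← mul_assoc, e2, e1]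
    calc (r ^ 2 / t) ^ (s / 2) * t ^ ((j:ℝ) - 1) * (exp (-t) * exp (-(r ^ 2 / t)))
        ≤ ((s/2) ^ (s/2) * exp (r ^ 2 / t)) * t ^ ((j:ℝ) - 1) * (exp (-t) * exp (-(r ^ 2 / t))) := by
          gcongr
      _ = (s/2) ^ (s/2) * (exp (-t) * t ^ ((j:ℝ) - 1)) * (exp (r ^ 2 / t) * exp (-(r ^ 2 / t))) := by ring
      _ = _ := by rw [← exp_add]; simp
/-- Coefficients of the Gegenbauer polynomial, extended by zero. -/
noncomputable def gcoef (n k j : ℕ) : ℝ :=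
  if 2 * j ≤ k then (-1 : ℝ) ^ j * Gamma (((n : ℝ) - 1) / 2 + (k : ℝ) - (j : ℝ)) /
        (Gamma (((n : ℝ) - 1) / 2) * (Nat.factorial j : ℝ) *
          (Nat.factorial (k - 2 * j) : ℝ)) else 0

lemma gegenbauerP_eq_sum (n k N : ℕ) (hN : k / 2 + 1 ≤ N) (z : ℝ) :
    gegenbauerP n k z = ∑ j ∈ Finset.range N, gcoef n k j * (2 * z) ^ (k - 2 * j) := by
  rw [gegenbauerP]
  rw [← Finset.sum_subset (Finset.range_subset_range.2 hN)]
  · refine Finset.sum_congr rfl fun j hj => ?_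
    rw [Finset.mem_range] at hj
    rw [gcoef, if_pos (by omega)]
  · intro j _ hj
    rw [Finset.mem_range] at hj
    rw [gcoef, if_neg (by omega), zero_mul]

lemma gcoef_rec_zero (n k : ℕ) (hn : 2 ≤ n) :
    ((k : ℝ) + 2) * gcoef n (k + 2) 0 = (k + 1 + ((n : ℝ) - 1) / 2) * gcoef n (k + 1) 0 := by
  have hα : (0:ℝ) < ((n : ℝ) - 1) / 2 := by
    have : (2:ℝ) ≤ n := by exact_mod_cast hn
    linarith
  set α : ℝ := ((n : ℝ) - 1) / 2 with hαdef
  have hG := (Gamma_pos_of_pos hα).ne'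
  simp only [gcoef, ← hαdef, Nat.mul_zero, Nat.zero_le, if_true, pow_zero, Nat.sub_zero,
    Nat.factorial_zero, Nat.cast_zero, sub_zero, one_mul, Nat.cast_one, mul_one]
  rw [Nat.factorial_succ (k + 1)]
  have : α + ((k + 2 : ℕ) : ℝ) = (α + ((k + 1 : ℕ) : ℝ)) + 1 := by push_cast; ring
  rw [this, Gamma_add_one (by positivity)]
  have hf : (((k+1).factorial : ℕ) : ℝ) ≠ 0 := by positivity
  push_cast
  field_simp
  ring

lemma gcoef_rec (n k j : ℕ) (hn : 2 ≤ n) :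
    ((k : ℝ) + 2) * gcoef n (k + 2) (j + 1) =
      (k + 1 + ((n : ℝ) - 1) / 2) * gcoef n (k + 1) (j + 1) - (k + (n - 1)) * gcoef n k j := by
  have hα : (0:ℝ) < ((n : ℝ) - 1) / 2 := by
    have : (2:ℝ) ≤ n := by exact_mod_cast hn
    linarith
  have hn1 : (n : ℝ) - 1 = 2 * (((n : ℝ) - 1) / 2) := by ring
  rw [hn1]
  rw [show 2 * (((n : ℝ) - 1) / 2) / 2 = ((n : ℝ) - 1) / 2 by ring]
  simp only [gcoef]
  set α : ℝ := ((n : ℝ) - 1) / 2 with hαdef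
  have hG := (Gamma_pos_of_pos hα).ne'
  have hj1 : (j:ℝ) + 1 ≠ 0 := by positivity
  have hjf : ((j.factorial : ℕ) : ℝ) ≠ 0 := by positivity
  rcases lt_trichotomy k (2 * j) with h | h | h
  · rw [if_neg (by omega), if_neg (by omega), if_neg (by omega)]; ring
  · rw [if_pos (by omega), if_neg (by omega), if_pos (by omega)]
    subst h
    have e1 : α + ((2 * j + 2 : ℕ) : ℝ) - ((j + 1 : ℕ) : ℝ) = (α + j) + 1 := by push_cast; ring
    have e2 : α + ((2 * j : ℕ) : ℝ) - (j : ℝ) = α + j := by push_cast; ring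
    rw [e1, e2, Gamma_add_one (by positivity), show 2 * j + 2 - 2 * (j + 1) = 0 by omega,
      show 2 * j - 2 * j = 0 by omega, Nat.factorial_succ, pow_succ]
    push_cast
    field_simp
    simp
    ring
  · obtain ⟨m, rfl⟩ : ∃ m, k = 2 * j + 1 + m := ⟨k - (2 * j + 1), by omega⟩
    rw [if_pos (by omega), if_pos (by omega), if_pos (by omega)]
    have e1 : α + ((2 * j + 1 + m + 2 : ℕ) : ℝ) - ((j + 1 : ℕ) : ℝ) = (α + j + 1 + m) + 1 := by
      push_cast; ring
    have e2 : α + ((2 * j + 1 + m + 1 : ℕ) : ℝ) - ((j + 1 : ℕ) : ℝ) = α + j + 1 + m := by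
      push_cast; ring
    have e3 : α + ((2 * j + 1 + m : ℕ) : ℝ) - (j : ℝ) = α + j + 1 + m := by push_cast; ring
    rw [e1, e2, e3, Gamma_add_one (by positivity),
      show 2 * j + 1 + m + 2 - 2 * (j + 1) = m + 1 by omega,
      show 2 * j + 1 + m + 1 - 2 * (j + 1) = m by omega,
      show 2 * j + 1 + m - 2 * j = m + 1 by omega, Nat.factorial_succ, Nat.factorial_succ, pow_succ]
    have hmf : ((m.factorial : ℕ) : ℝ) ≠ 0 := by positivity
    have hm1 : (m:ℝ) + 1 ≠ 0 := by positivity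
    push_cast
    field_simp
    ring

lemma gegenbauerP_rec (n k : ℕ) (hn : 2 ≤ n) (z : ℝ) :
    ((k : ℝ) + 2) * gegenbauerP n (k + 2) z =
      (2 * k + n + 1) * z * gegenbauerP n (k + 1) z - (k + (n - 1)) * gegenbauerP n k z := by
  set N := k + 3
  rw [gegenbauerP_eq_sum n (k + 2) (N + 1) (by omega), gegenbauerP_eq_sum n (k + 1) (N + 1) (by omega),
    gegenbauerP_eq_sum n k N (by omega)]
  rw [Finset.sum_range_succ' _ N, Finset.sum_range_succ' _ N]
  have h0 := gcoef_rec_zero n k hn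
  have e0 : ((k : ℝ) + 2) * (gcoef n (k + 2) 0 * (2 * z) ^ (k + 2 - 2 * 0)) =
      (2 * k + n + 1) * z * (gcoef n (k + 1) 0 * (2 * z) ^ (k + 1 - 2 * 0)) := by
    simp only [Nat.mul_zero, Nat.sub_zero]
    rw [pow_succ (2 * z) (k + 1)]
    linear_combination ((2 * z) ^ (k+1) * (2 * z)) * h0
  have e1 : ((k : ℝ) + 2) * (∑ j ∈ Finset.range N, gcoef n (k + 2) (j + 1) * (2 * z) ^ (k + 2 - 2 * (j + 1))) =
      (2 * k + n + 1) * z * (∑ j ∈ Finset.range N, gcoef n (k + 1) (j + 1) * (2 * z) ^ (k + 1 - 2 * (j + 1)))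
       - (k + (n - 1)) * ∑ j ∈ Finset.range N, gcoef n k j * (2 * z) ^ (k - 2 * j) := by
    rw [Finset.mul_sum, Finset.mul_sum, Finset.mul_sum, ← Finset.sum_sub_distrib]
    refine Finset.sum_congr rfl fun j _ => ?_
    have h := gcoef_rec n k j hn
    rw [show k + 2 - 2 * (j + 1) = k - 2 * j by omega]
    by_cases hj : 2 * (j + 1) ≤ k + 1
    · rw [show k - 2 * j = (k + 1 - 2 * (j + 1)) + 1 by omega, pow_succ]
      linear_combination ((2 * z) ^ (k + 1 - 2 * (j + 1)) * (2 * z)) * h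
    · have : gcoef n (k + 1) (j + 1) = 0 := by rw [gcoef, if_neg hj]
      rw [this] at h ⊢
      linear_combination ((2 * z) ^ (k - 2 * j)) * h
  linear_combination e0 + e1

open Polynomial in
/-- The Gegenbauer polynomials in the variable `w = (1+z)/2`. -/
noncomputable def geg (n : ℕ) : ℕ → ℝ[X]
  | 0 => 1
  | 1 => C ((n : ℝ) - 1) * (2 * X - 1)
  | (k + 2) => C (((k : ℝ) + 2)⁻¹) * (C (2 * (k : ℝ) + n + 1) * (2 * X - 1) * geg n (k + 1)
      - C ((k : ℝ) + (n - 1)) * geg n k)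

lemma geg_eval (n : ℕ) (hn : 2 ≤ n) (w : ℝ) : ∀ k : ℕ,
    gegenbauerP n k (2 * w - 1) = (geg n k).eval w := by
  have hα : (0:ℝ) < ((n : ℝ) - 1) / 2 := by
    have : (2:ℝ) ≤ n := by exact_mod_cast hn
    linarith
  have hG := (Gamma_pos_of_pos hα).ne'
  have key : ∀ k : ℕ, gegenbauerP n k (2 * w - 1) = (geg n k).eval w ∧
      gegenbauerP n (k + 1) (2 * w - 1) = (geg n (k + 1)).eval w := by
    intro k
    induction k with
    | zero =>
      constructor
      · simp [gegenbauerP, geg, hG]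
      · simp [gegenbauerP, geg]
        rw [Gamma_add_one hα.ne']
        field_simp
    | succ k ih =>
      refine ⟨ih.2, ?_⟩
      have h := gegenbauerP_rec n k hn (2 * w - 1)
      rw [ih.1, ih.2] at h
      have hk : (k:ℝ) + 2 ≠ 0 := by positivity
      show gegenbauerP n (k + 2) _ = (geg n (k+2)).eval w
      simp only [geg, Polynomial.eval_mul, Polynomial.eval_sub, Polynomial.eval_C,
        Polynomial.eval_X, Polynomial.eval_one, Polynomial.eval_ofNat]
      rw [eq_inv_mul_iff_mul_eq₀ hk, h]
  exact fun k => (key k).1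

open Polynomial in
lemma geg_rec (n k : ℕ) : C ((k : ℝ) + 2) * geg n (k + 2) =
    C (2 * (k : ℝ) + n + 1) * (2 * X - 1) * geg n (k + 1) - C ((k : ℝ) + (n - 1)) * geg n k := by
  have hk : (k:ℝ) + 2 ≠ 0 := by positivity
  simp only [geg]
  rw [← mul_assoc, ← C_mul, mul_inv_cancel₀ hk]
  simp

open Polynomial in
lemma geg_deriv (n : ℕ) : ∀ k : ℕ,
    2 * X * (1 - X) * derivative (geg n (k + 1)) =
      C ((k : ℝ) + (n - 1)) * geg n k - C ((k : ℝ) + 1) * (2 * X - 1) * geg n (k + 1) := by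
  intro k
  induction k using Nat.twoStepInduction with
  | zero => simp [geg]; ring
  | one =>
    have h := geg_rec n 0
    have hd := congrArg derivative h
    simp only [geg] at hd h ⊢
    simp [derivative_mul] at hd h ⊢
    have h2 : (C 2 : ℝ[X]) * C (2⁻¹) = 1 := by rw [← C_mul]; norm_num
    have h2' : (C 2 : ℝ[X]) = 2 := rfl
    rw [h2'] at h2
    have hX : (2:ℝ[X]) ≠ 0 := by norm_num
    apply mul_left_cancel₀ hX
    linear_combination ((2 * X * (1 - X)) * ((↑n + 1) * 2 * ((↑n - 1) * (2 * X - 1)) + (↑n + 1) * (2 * X - 1) * ((↑n - 1) * 2)) + 2 * (2 * X - 1) * ((↑n + 1) * (2 * X - 1) * ((↑n - 1) * (2 * X - 1)) - (↑n - 1))) * h2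
  | more k ih1 ih2 =>
    have hk : ((k:ℝ) + 3) ≠ 0 := by positivity
    have r1 := geg_rec n k
    have r2 := geg_rec n (k + 1)
    have hd := congrArg derivative r2
    have hC : (C ((k:ℝ) + 3)) ≠ 0 := by rwa [Ne, C_eq_zero]
    apply mul_left_cancel₀ hC
    simp only [derivative_mul, derivative_sub, derivative_C, derivative_X, derivative_one,
      derivative_ofNat] at hd
    simp only [Nat.cast_add, Nat.cast_one, Nat.cast_ofNat, C_add, C_mul, C_sub, C_1, C_ofNat] at *
    rw [show k + 1 + 2 = k + 2 + 1 by ring] at *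
    rw [show k + 1 + 1 = k + 2 by ring] at *
    linear_combination (2 * X * (1 - X)) * hd + (2 * (C (k:ℝ) + 1) + C (n:ℝ) + 1) * (2 * X - 1) * ih2 - (C (k:ℝ) + 1 + (C (n:ℝ) - 1)) * ih1 - (C (k:ℝ) + 1 + (C (n:ℝ) - 1)) * r1 + (C (k:ℝ) + 3) * (2 * X - 1) * r2

open Polynomial in
/-- Conjugated dilation generator. -/
noncomputable def dilD (a : ℝ) (P : ℝ[X]) : ℝ[X] :=
  -(2 * X * (1 - X) * derivative P) + C a * (2 * X - 1) * P

/-- Radial Fourier profile of `P(w) w^a`. -/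
noncomputable def profL (n : ℕ) (a r : ℝ) : Polynomial ℝ →ₗ[ℝ] ℝ :=
  Polynomial.lsum fun j => LinearMap.toSpanSingleton ℝ ℝ (besI (a + j - n / 2) r / Gamma (a + j))

lemma profL_monomial (n : ℕ) (a r c : ℝ) (j : ℕ) :
    profL n a r (Polynomial.monomial j c) = c * (besI (a + j - n / 2) r / Gamma (a + j)) := by
  simp [profL, Polynomial.lsum_apply, LinearMap.toSpanSingleton_apply]

open Polynomial in
lemma dilD_add (a : ℝ) (P Q : ℝ[X]) : dilD a (P + Q) = dilD a P + dilD a Q := by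
  simp only [dilD, derivative_add]; ring

open Polynomial in
lemma dilD_monomial (a c : ℝ) (j : ℕ) : dilD a (monomial j c) =
    monomial (j + 1) (2 * (a + j) * c) - monomial j ((2 * j + a) * c) := by
  simp only [dilD, ← C_mul_X_pow_eq_monomial, derivative_mul, derivative_C, derivative_X_pow,
    C_mul, C_add, C_ofNat]
  cases j with
  | zero => simp; ring
  | succ j => 
    simp only [Nat.add_sub_cancel]
    ring

lemma profL_hasDerivAt (n : ℕ) {a : ℝ} (ha : 0 < a) {r : ℝ} (hr : 0 < r) (P : Polynomial ℝ) :
    HasDerivAt (fun r => profL n a r P)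
      (-(profL n a r (dilD a P) + (n - a) * profL n a r P) / r) r := by
  induction P using Polynomial.induction_on' with
  | add p q hp hq =>
    simp only [map_add, dilD_add]
    refine (hp.add hq).congr_deriv ?_
    ring
  | monomial j c =>
    simp only [dilD_monomial, map_sub, profL_monomial]
    have h := ((besI_hasDerivAt' (a + j - n / 2) hr).div_const (Gamma (a + j))).const_mul c
    refine h.congr_deriv ?_
    have haj : 0 < a + j := by positivity
    have hG := (Gamma_pos_of_pos haj).ne'
    have e : a + ((j + 1 : ℕ) : ℝ) = (a + j) + 1 := by push_cast; ring
    rw [e, Gamma_add_one haj.ne', show a + ↑j + 1 - (n:ℝ) / 2 = a + j - n / 2 + 1 by ring]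
    field_simp
    ring

open Polynomial in
lemma dilD_geg_zero (n : ℕ) (hn : 2 ≤ n) (a : ℝ) :
    dilD a (geg n 0) = (a / ((n : ℝ) - 1)) • geg n 1 := by
  have : (2:ℝ) ≤ n := by exact_mod_cast hn
  have h1 : (n:ℝ) - 1 ≠ 0 := by linarith
  rw [smul_eq_C_mul]
  simp only [dilD, geg]
  rw [← mul_assoc, ← C_mul, div_mul_cancel₀ _ h1]
  simp

open Polynomial in
lemma dilD_geg_succ (n k : ℕ) (a : ℝ) :
    dilD a (geg n (k + 1)) = ((a + k + 1) / (2 * k + n + 1) * (k + 2)) • geg n (k + 2)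
      + (((a + k + 1) / (2 * k + n + 1) - 1) * (k + (n - 1))) • geg n k := by
  have h0 : (2 * (k:ℝ) + n + 1) ≠ 0 := by positivity
  simp only [smul_eq_C_mul]
  have h1 := geg_rec n k
  have h2 := geg_deriv n k
  set A : ℝ := (a + k + 1) / (2 * k + n + 1) with hA
  have hA' : A * (2 * k + n + 1) = a + k + 1 := div_mul_cancel₀ _ h0
  have hC : C A * C (2 * (k:ℝ) + n + 1) = C a + C ((k:ℝ) + 1) := by
    rw [← C_mul, hA', ← C_add]; ring_nf
  rw [dilD, h2, C_mul, C_mul, C_sub, C_1]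
  linear_combination -(C A) * h1 - (2 * X - 1) * geg n (k+1) * hC

/-- Eigenvalues. -/
noncomputable def lam (n : ℕ) (s : ℝ) (k : ℕ) : ℝ :=
  2 ^ s * Gamma ((k : ℝ) + ((n : ℝ) + s) / 2) / Gamma ((k : ℝ) + ((n : ℝ) - s) / 2)

lemma lam_succ (n : ℕ) {s : ℝ} (hs : 0 < s) (hsn : s < n) (k : ℕ) :
    lam n s (k + 1) * (k + (n - s) / 2) = lam n s k * (k + (n + s) / 2) := by
  have h1 : 0 < (k:ℝ) + ((n:ℝ) - s) / 2 := by
    have : 0 < ((n:ℝ) - s) / 2 := by linarith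
    positivity
  have h2 : 0 < (k:ℝ) + ((n:ℝ) + s) / 2 := by positivity
  simp only [lam]
  rw [show ((k + 1 : ℕ) : ℝ) + ((n:ℝ) + s) / 2 = (k + ((n:ℝ) + s) / 2) + 1 by push_cast; ring,
    show ((k + 1 : ℕ) : ℝ) + ((n:ℝ) - s) / 2 = (k + ((n:ℝ) - s) / 2) + 1 by push_cast; ring,
    Gamma_add_one h1.ne', Gamma_add_one h2.ne']
  generalize (k:ℝ) + ((n:ℝ) - s) / 2 = a at *
  have g1 := (Gamma_pos_of_pos h1).ne'
  field_simp

lemma prof_step (n : ℕ) {s : ℝ} (hs : 0 < s) (hsn : s < n) (P : Polynomial ℝ) (l : ℝ)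
    (h : ∀ r : ℝ, 0 < r → (2 * r) ^ s * profL n ((n - s) / 2) r P = l * profL n ((n + s) / 2) r P)
    {r : ℝ} (hr : 0 < r) :
    (2 * r) ^ s * profL n ((n - s) / 2) r (dilD ((n - s) / 2) P) =
      l * profL n ((n + s) / 2) r (dilD ((n + s) / 2) P) := by
  have ha : 0 < ((n:ℝ) - s) / 2 := by linarith
  have hb : 0 < ((n:ℝ) + s) / 2 := by positivity
  have hp : HasDerivAt (fun r : ℝ => (2 * r) ^ s) (s * (2 * r) ^ s / r) r := by
    have h0 : HasDerivAt (fun r : ℝ => 2 * r) 2 r := by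
      simpa using (hasDerivAt_id r).const_mul 2
    refine (h0.rpow_const (p := s) (Or.inl (by positivity))).congr_deriv ?_
    rw [rpow_sub_one (by positivity)]
    field_simp
  have h1 := hp.mul (profL_hasDerivAt n ha hr P)
  have h2 := (profL_hasDerivAt n hb hr P).const_mul l
  have h3 : (fun r => (2 * r) ^ s * profL n ((n - s) / 2) r P) =ᶠ[nhds r]
      (fun r => l * profL n ((n + s) / 2) r P) := by
    filter_upwards [lt_mem_nhds hr] with x hx using h x hx
  have h4 := h1.unique (h2.congr_of_eventuallyEq h3)
  have h5 := h r hr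
  field_simp at h4
  linear_combination -h4 / 2 - (n - s) / 2 * h5

lemma prof_eq (n : ℕ) (hn : 2 ≤ n) {s : ℝ} (hs : 0 < s) (hsn : s < n) : ∀ k : ℕ, ∀ r : ℝ, 0 < r →
    (2 * r) ^ s * profL n ((n - s) / 2) r (geg n k) =
      lam n s k * profL n ((n + s) / 2) r (geg n k) := by
  have hn2 : (2:ℝ) ≤ n := by exact_mod_cast hn
  have ha : 0 < ((n:ℝ) - s) / 2 := by linarith
  have hb : 0 < ((n:ℝ) + s) / 2 := by positivity
  intro k
  induction k using Nat.twoStepInduction with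
  | zero =>
    intro r hr
    have e : geg n 0 = Polynomial.monomial 0 (1:ℝ) := by simp [geg]
    rw [e, profL_monomial, profL_monomial]
    simp only [Nat.cast_zero, add_zero, lam, zero_add, one_mul]
    rw [show ((n:ℝ) - s) / 2 - n / 2 = -(s / 2) by ring, show ((n:ℝ) + s) / 2 - n / 2 = s / 2 by ring,
      besI_symm _ hr, mul_rpow (by norm_num) hr.le, show 2 * (s / 2) = s by ring, rpow_neg hr.le]
    have g1 := (Gamma_pos_of_pos ha).ne'
    have g2 := (Gamma_pos_of_pos hb).ne'
    have : r ^ s ≠ 0 := by positivity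
    field_simp
  | one =>
    intro r hr
    have e0 : ∀ r : ℝ, 0 < r →
        (2 * r) ^ s * profL n ((n - s) / 2) r (geg n 0) =
          lam n s 0 * profL n ((n + s) / 2) r (geg n 0) := by
      intro r hr
      have e : geg n 0 = Polynomial.monomial 0 (1:ℝ) := by simp [geg]
      rw [e, profL_monomial, profL_monomial]
      simp only [Nat.cast_zero, add_zero, lam, zero_add, one_mul]
      rw [show ((n:ℝ) - s) / 2 - n / 2 = -(s / 2) by ring, show ((n:ℝ) + s) / 2 - n / 2 = s / 2 by ring,
        besI_symm _ hr, mul_rpow (by norm_num) hr.le, show 2 * (s / 2) = s by ring, rpow_neg hr.le]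
      have g1 := (Gamma_pos_of_pos ha).ne'
      have g2 := (Gamma_pos_of_pos hb).ne'
      have : r ^ s ≠ 0 := by positivity
      field_simp
    have h := prof_step n hs hsn _ _ e0 hr
    rw [dilD_geg_zero n hn, dilD_geg_zero n hn, map_smul, map_smul, smul_eq_mul, smul_eq_mul] at h
    have hl := lam_succ n hs hsn 0
    simp only [Nat.cast_zero, zero_add] at hl
    have hn1 : (n:ℝ) - 1 ≠ 0 := by linarith
    field_simp at h
    have : ((n:ℝ) - s) / 2 * ((2 * r) ^ s * profL n ((n - s) / 2) r (geg n 1)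
      - lam n s 1 * profL n ((n + s) / 2) r (geg n 1)) = 0 := by
      linear_combination h / 2 - profL n ((n + s) / 2) r (geg n 1) * hl
    linarith [(mul_eq_zero.1 this).resolve_left ha.ne']
  | more k ih1 ih2 =>
    intro r hr
    have h := prof_step n hs hsn _ _ ih2 hr
    rw [dilD_geg_succ, dilD_geg_succ, map_add, map_add, map_smul, map_smul, map_smul, map_smul] at h
    simp only [smul_eq_mul] at h
    have i1 := ih1 r hr
    have l1 := lam_succ n hs hsn k
    have l2 := lam_succ n hs hsn (k + 1)
    push_cast at l2
    rw [show k + 1 + 1 = k + 2 by ring] at *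
    set U2 := profL n ((n - s) / 2) r (geg n (k + 2))
    set U0 := profL n ((n - s) / 2) r (geg n k)
    set V2 := profL n ((n + s) / 2) r (geg n (k + 2))
    set V0 := profL n ((n + s) / 2) r (geg n k)
    have h0 : (2 * (k:ℝ) + n + 1) ≠ 0 := by positivity
    set q := (2 * (k:ℝ) + n + 1) with hq
    have hA : ∀ a : ℝ, (a + k + 1) / q * q = a + k + 1 := fun a => div_mul_cancel₀ _ h0
    have h' : (((n:ℝ) - s) / 2 + k + 1) * (k + 2) * ((2 * r) ^ s * U2)
        + (((n:ℝ) - s) / 2 + k + 1 - q) * (k + (n - 1)) * ((2 * r) ^ s * U0)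
        = lam n s (k + 1) * ((((n:ℝ) + s) / 2 + k + 1) * (k + 2) * V2 +
          (((n:ℝ) + s) / 2 + k + 1 - q) * (k + (n - 1)) * V0) := by
      have h1 := hA (((n:ℝ) - s) / 2)
      have h2 := hA (((n:ℝ) + s) / 2)
      generalize (((n:ℝ) - s) / 2 + k + 1) / q = A1 at *
      generalize (((n:ℝ) + s) / 2 + k + 1) / q = A2 at *
      clear_value q
      linear_combination q * h - ((k + 2) * ((2 * r) ^ s * U2) + (k + (n - 1)) * ((2 * r) ^ s * U0)) * h1
        + lam n s (k + 1) * ((k + 2) * V2 + (k + (n - 1)) * V0) * h2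
    rw [i1] at h'
    have hpos : (((n:ℝ) - s) / 2 + k + 1) * (k + 2) ≠ 0 := by positivity
    have : (((n:ℝ) - s) / 2 + k + 1) * (k + 2) * ((2 * r) ^ s * U2 - lam n s (k + 2) * V2) = 0 := by
      rw [hq] at h'
      linear_combination h' - (k + 2) * V2 * l2 - (k + (n - 1)) * V0 * l1
    linarith [(mul_eq_zero.1 this).resolve_left hpos]

lemma gauss_step {n : ℕ} {h : EuclideanSpace ℝ (Fin n) → ℂ} (hh : Integrable h) {t : ℝ} (ht : 0 < t) :
    ∫ x, (exp (-t * ‖x‖ ^ 2) : ℂ) * 𝓕⁻ h x =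
      ∫ ξ, (((π / t) ^ ((n : ℝ) / 2) * exp (-(π * ‖ξ‖) ^ 2 / t) : ℝ) : ℂ) * h ξ := by
  have hb : 0 < (t : ℂ).re := by simpa
  have hG : Integrable (fun v : EuclideanSpace ℝ (Fin n) => Complex.exp (-(t : ℂ) * ‖v‖ ^ 2)) := by
    simpa using GaussianFourier.integrable_cexp_neg_mul_sq_norm_add hb 0 (0 : EuclideanSpace ℝ (Fin n))
  have key := VectorFourier.integral_fourierIntegral_smul_eq_flip (L := innerₗ (EuclideanSpace ℝ (Fin n)))
    (μ := volume) (ν := volume) (e := 𝐞) Real.continuous_fourierChar continuous_inner hG hh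
  have e1 : ∫ x, (exp (-t * ‖x‖ ^ 2) : ℂ) * 𝓕⁻ h x = ∫ x, Complex.exp (-(t : ℂ) * ‖x‖ ^ 2) * 𝓕 h x := by
    rw [← integral_neg_eq_self]
    refine integral_congr_ae (Filter.Eventually.of_forall fun x => ?_)
    simp only [norm_neg, Real.fourierInv_eq_fourier_neg, neg_neg]
    push_cast; rfl
  rw [e1]
  have e2 : ∫ x, Complex.exp (-(t : ℂ) * ‖x‖ ^ 2) * 𝓕 h x =
     ∫ ξ, 𝓕 (fun v : EuclideanSpace ℝ (Fin n) => Complex.exp (-(t : ℂ) * ‖v‖ ^ 2)) ξ * h ξ := by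
    rw [flip_innerₗ] at key
    exact key.symm
  rw [e2]
  refine integral_congr_ae (Filter.Eventually.of_forall fun x => ?_)
  simp only
  rw [fourier_gaussian_innerProductSpace hb]
  congr 1
  rw [finrank_euclideanSpace_fin]
  push_cast
  rw [Complex.ofReal_cpow (by positivity)]
  push_cast
  congr 2
  ring

lemma rpow_neg_integral {a : ℝ} (ha : 0 < a) {A : ℝ} (hA : 0 < A) :
    A ^ (-a) = (Gamma a)⁻¹ * ∫ t in Set.Ioi (0:ℝ), t ^ (a - 1) * exp (-(A * t)) := by
  rw [Real.integral_rpow_mul_exp_neg_mul_Ioi ha hA]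
  rw [rpow_neg hA.le, one_div, inv_rpow hA.le]
  field_simp [(Gamma_pos_of_pos ha).ne']

lemma lemmaM {n : ℕ} (hn : 2 ≤ n) {h : EuclideanSpace ℝ (Fin n) → ℂ} (hh : Integrable h)
    (hF : Integrable (𝓕⁻ h)) {a : ℝ} (ha : 0 < a)
    (hb : Integrable (fun ξ => (besI (a - n / 2) (π * ‖ξ‖) : ℂ) * h ξ)) :
    ∫ x, (((1 + ‖x‖ ^ 2) ^ (-a) : ℝ) : ℂ) * 𝓕⁻ h x =
      ((π ^ ((n : ℝ) / 2) / Gamma a : ℝ) : ℂ) * ∫ ξ, (besI (a - n / 2) (π * ‖ξ‖) : ℂ) * h ξ := by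
  have hGa := Gamma_pos_of_pos ha
  have hi1 : IntegrableOn (fun t : ℝ => t ^ (a - 1) * exp (-t)) (Set.Ioi 0) := by
    have := Real.GammaIntegral_convergent ha
    refine this.congr (Filter.Eventually.of_forall fun t => ?_)
    ring
  -- left side
  have L1 : ∀ x : EuclideanSpace ℝ (Fin n), (((1 + ‖x‖ ^ 2) ^ (-a) : ℝ) : ℂ) * 𝓕⁻ h x =
      ((Gamma a)⁻¹ : ℂ) * ∫ t in Set.Ioi (0:ℝ),
        ((t ^ (a - 1) * exp (-t) * exp (-t * ‖x‖ ^ 2) : ℝ) : ℂ) * 𝓕⁻ h x := by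
    intro x
    rw [rpow_neg_integral ha (by positivity : 0 < 1 + ‖x‖ ^ 2), integral_mul_const]
    rw [integral_complex_ofReal]
    have : ∀ t : ℝ, t ^ (a - 1) * exp (-t) * exp (-t * ‖x‖ ^ 2) =
        t ^ (a - 1) * exp (-((1 + ‖x‖ ^ 2) * t)) := by
      intro t
      rw [mul_assoc, ← exp_add]
      congr 2; ring
    simp_rw [this]
    push_cast
    rw [mul_assoc]
  have P1 : Integrable (fun p : EuclideanSpace ℝ (Fin n) × ℝ =>
      ((p.2 ^ (a - 1) * exp (-p.2) * exp (-p.2 * ‖p.1‖ ^ 2) : ℝ) : ℂ) * 𝓕⁻ h p.1)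
      (volume.prod (volume.restrict (Set.Ioi 0))) := by
    have h0 := hF.mul_prod (hi1.ofReal (𝕜 := ℂ))
    refine h0.mono ?_ ?_
    · refine AEStronglyMeasurable.mul ?_ hF.aestronglyMeasurable.comp_fst
      refine Measurable.aestronglyMeasurable ?_
      fun_prop
    · have hae : ∀ᵐ p ∂((volume : Measure (EuclideanSpace ℝ (Fin n))).prod
          (volume.restrict (Set.Ioi (0:ℝ)))), 0 < p.2 := by
        have : ∀ᵐ t ∂(volume.restrict (Set.Ioi (0:ℝ))), 0 < t := ae_restrict_mem measurableSet_Ioi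
        exact Measure.quasiMeasurePreserving_snd.ae this
      filter_upwards [hae] with p hp
      rw [norm_mul, norm_mul, mul_comm]
      gcongr
      simp only [RCLike.ofReal_eq_complex_ofReal, Complex.norm_real, norm_mul]
      refine mul_le_of_le_one_right (by positivity) ?_
      rw [norm_of_nonneg (exp_pos _).le, exp_le_one_iff]
      have : 0 ≤ p.2 * ‖p.1‖ ^ 2 := by positivity
      linarith
  have S1 : ∫ x, (((1 + ‖x‖ ^ 2) ^ (-a) : ℝ) : ℂ) * 𝓕⁻ h x = ((Gamma a)⁻¹ : ℂ) *
      ∫ t in Set.Ioi (0:ℝ), ∫ x : EuclideanSpace ℝ (Fin n),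
        ((t ^ (a - 1) * exp (-t) * exp (-t * ‖x‖ ^ 2) : ℝ) : ℂ) * 𝓕⁻ h x := by
    simp_rw [L1]
    rw [integral_const_mul, integral_integral_swap]
    exact P1
  have S2 : ∫ t in Set.Ioi (0:ℝ), ∫ x : EuclideanSpace ℝ (Fin n),
        ((t ^ (a - 1) * exp (-t) * exp (-t * ‖x‖ ^ 2) : ℝ) : ℂ) * 𝓕⁻ h x =
      ∫ t in Set.Ioi (0:ℝ), ∫ ξ : EuclideanSpace ℝ (Fin n),
        ((π ^ ((n : ℝ) / 2) * (t ^ (a - n / 2 - 1) * exp (-t - (π * ‖ξ‖) ^ 2 / t)) : ℝ) : ℂ) * h ξ := by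
    refine setIntegral_congr_fun measurableSet_Ioi fun t ht => ?_
    have ht : 0 < t := ht
    have := gauss_step hh ht
    have e : ∀ x : EuclideanSpace ℝ (Fin n),
       ((t ^ (a - 1) * exp (-t) * exp (-t * ‖x‖ ^ 2) : ℝ) : ℂ) * 𝓕⁻ h x
       = ((t ^ (a - 1) * exp (-t) : ℝ) : ℂ) * ((exp (-t * ‖x‖ ^ 2) : ℂ) * 𝓕⁻ h x) := by
      intro x; push_cast; ring
    simp_rw [e]
    rw [integral_const_mul, this, ← integral_const_mul]
    refine integral_congr_ae (Filter.Eventually.of_forall fun ξ => ?_)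
    simp only
    rw [← mul_assoc, ← Complex.ofReal_mul]
    congr 2
    rw [div_rpow pi_pos.le ht.le, show a - n / 2 - 1 = (a - 1) - n / 2 by ring, rpow_sub ht (a - 1),
      show -t - (π * ‖ξ‖) ^ 2 / t = -t + (-(π * ‖ξ‖) ^ 2 / t) by ring, exp_add]
    ring
  have hpos : ∀ᵐ ξ : EuclideanSpace ℝ (Fin n), 0 < π * ‖ξ‖ := by
    have : Nonempty (Fin n) := ⟨⟨0, by omega⟩⟩
    have : Nontrivial (EuclideanSpace ℝ (Fin n)) := inferInstance
    have : ∀ᵐ ξ : EuclideanSpace ℝ (Fin n), ξ ≠ 0 := by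
      simp [ae_iff]
    filter_upwards [this] with ξ hξ
    positivity
  have P2 : Integrable (fun p : EuclideanSpace ℝ (Fin n) × ℝ =>
      ((π ^ ((n : ℝ) / 2) * (p.2 ^ (a - n / 2 - 1) * exp (-p.2 - (π * ‖p.1‖) ^ 2 / p.2)) : ℝ) : ℂ) * h p.1)
      (volume.prod (volume.restrict (Set.Ioi 0))) := by
    rw [integrable_prod_iff]
    · constructor
      · filter_upwards [hpos] with ξ hξ
        exact (((besI_integrableOn (a - n / 2) hξ).const_mul _).ofReal).mul_const _
      · have := (hb.norm).const_mul (π ^ ((n : ℝ) / 2))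
        refine this.congr (Filter.Eventually.of_forall fun ξ => ?_)
        simp only [norm_mul, Complex.norm_real]
        rw [integral_mul_const, integral_const_mul, norm_of_nonneg (besI_nonneg _ _), 
          norm_of_nonneg (by positivity : 0 ≤ π ^ ((n : ℝ) / 2)), mul_assoc]
        congr 2
        refine setIntegral_congr_fun measurableSet_Ioi fun t ht => ?_
        have ht : 0 < t := ht
        rw [norm_of_nonneg (by positivity), norm_of_nonneg (by positivity)]
    · refine AEStronglyMeasurable.mul ?_ hh.aestronglyMeasurable.comp_fst
      refine Measurable.aestronglyMeasurable ?_
      fun_prop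
  rw [S1, S2, ← integral_integral_swap P2, ← integral_const_mul, ← integral_const_mul]
  refine integral_congr_ae (Filter.Eventually.of_forall fun ξ => ?_)
  simp only
  rw [integral_mul_const, integral_complex_ofReal, integral_const_mul, besI]
  push_cast
  field_simp

lemma hmult_integrable {n : ℕ} {s : ℝ} (hs : 0 ≤ s) (φ : SchwartzMap (EuclideanSpace ℝ (Fin n)) ℂ) :
    Integrable (fun ξ : EuclideanSpace ℝ (Fin n) =>
            (((2 * π * ‖ξ‖) ^ s : ℝ) : ℂ) * φ ξ) := by
  obtain ⟨N, hN⟩ := exists_nat_ge s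
  have h0 := (φ.integrable (μ := volume)).norm
  have h1 := φ.integrable_pow_mul (volume) N
  have h2 := (h0.add h1).const_mul ((2 * π) ^ s)
  refine h2.mono' ?_ ?_
  · refine AEStronglyMeasurable.mul ?_ φ.continuous.aestronglyMeasurable
    refine Measurable.aestronglyMeasurable ?_
    fun_prop
  · refine Filter.Eventually.of_forall fun ξ => ?_
    rw [norm_mul, Complex.norm_real, norm_of_nonneg (by positivity), mul_rpow (by positivity) (by positivity),
      mul_assoc]
    refine mul_le_mul_of_nonneg_left ?_ (by positivity)
    have : ‖ξ‖ ^ s ≤ 1 + ‖ξ‖ ^ N := by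
      rcases le_total ‖ξ‖ 1 with h | h
      · have := rpow_le_one (norm_nonneg ξ) h hs
        have := pow_nonneg (norm_nonneg ξ) N
        linarith
      · have := rpow_le_rpow_of_exponent_le h hN
        rw [rpow_natCast] at this
        linarith
    simp only [Pi.add_apply]
    nlinarith [norm_nonneg (φ ξ)]

/-- The `L¹` norm of the inverse Fourier transform. -/
noncomputable def wnorm {n : ℕ} (A : EuclideanSpace ℝ (Fin n) → ℂ) : ℝ := ∫ x, ‖𝓕⁻ A x‖

lemma wnorm_nonneg {n : ℕ} (A : EuclideanSpace ℝ (Fin n) → ℂ) : 0 ≤ wnorm A :=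
  integral_nonneg fun _ => norm_nonneg _

lemma schwartz_inv_integrable {n : ℕ} (A : SchwartzMap (EuclideanSpace ℝ (Fin n)) ℂ) :
    Integrable (𝓕⁻ (⇑A)) := by
  rw [← SchwartzMap.fourierInv_coe]
  exact (𝓕⁻ A : SchwartzMap (EuclideanSpace ℝ (Fin n)) ℂ).integrable

lemma wnorm_mul {n : ℕ} (A B : SchwartzMap (EuclideanSpace ℝ (Fin n)) ℂ) :
    Integrable (𝓕⁻ (fun ξ => A ξ * B ξ)) ∧
    wnorm (fun ξ => A ξ * B ξ) ≤ wnorm A * wnorm B := by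
  set f : SchwartzMap (EuclideanSpace ℝ (Fin n)) ℂ := 𝓕⁻ A with hf
  set g : SchwartzMap (EuclideanSpace ℝ (Fin n)) ℂ := 𝓕⁻ B with hg
  have e1 : (fun ξ => A ξ * B ξ) = ⇑(SchwartzMap.pairing (ContinuousLinearMap.mul ℂ ℂ) A B) := by
    funext ξ; simp
  have hA : 𝓕 f = A := by simp [hf]
  have hB : 𝓕 g = B := by simp [hg]
  have e2 : (𝓕⁻ (SchwartzMap.pairing (ContinuousLinearMap.mul ℂ ℂ) A B) :
      SchwartzMap (EuclideanSpace ℝ (Fin n)) ℂ) =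
      SchwartzMap.convolution (ContinuousLinearMap.mul ℂ ℂ) f g := by
    rw [← hA, ← hB, ← SchwartzMap.fourier_convolution]
    simp
  have e3 : ∀ x, 𝓕⁻ (fun ξ => A ξ * B ξ) x =
      SchwartzMap.convolution (ContinuousLinearMap.mul ℂ ℂ) f g x := by
    intro x
    rw [e1, ← SchwartzMap.fourierInv_coe, e2]
  have e4 : wnorm A = ∫ x, ‖f x‖ := by
    rw [wnorm, hf, ← SchwartzMap.fourierInv_coe]
  have e5 : wnorm B = ∫ x, ‖g x‖ := by
    rw [wnorm, hg, ← SchwartzMap.fourierInv_coe]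
  constructor
  · rw [e1]; exact schwartz_inv_integrable _
  have hfi := f.integrable (μ := volume)
  have hgi := g.integrable (μ := volume)
  rw [e4, e5, wnorm]
  have := MeasureTheory.integral_convolution (ContinuousLinearMap.mul ℝ ℝ) hfi.norm hgi.norm
  rw [ContinuousLinearMap.mul_apply'] at this
  rw [← this]
  refine integral_mono_of_nonneg (Filter.Eventually.of_forall fun _ => norm_nonneg _)
    (Integrable.integrable_convolution (ContinuousLinearMap.mul ℝ ℝ) hfi.norm hgi.norm) 
    (Filter.Eventually.of_forall fun x => ?_)
  simp only
  rw [e3, SchwartzMap.convolution_apply, convolution_def, convolution_def]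
  refine (norm_integral_le_integral_norm _).trans (le_of_eq ?_)
  simp

/-- Dilation of a Schwartz function. -/
noncomputable def dil {n : ℕ} {l : ℝ} (hl : l ≠ 0) (A : SchwartzMap (EuclideanSpace ℝ (Fin n)) ℂ) :
    SchwartzMap (EuclideanSpace ℝ (Fin n)) ℂ :=
  SchwartzMap.compCLMOfContinuousLinearEquiv ℂ
    (ContinuousLinearEquiv.smulLeft (R₁ := ℝ) (M₁ := EuclideanSpace ℝ (Fin n)) (Units.mk0 l hl)) A

lemma dil_apply {n : ℕ} {l : ℝ} (hl : l ≠ 0) (A : SchwartzMap (EuclideanSpace ℝ (Fin n)) ℂ)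
    (ξ : EuclideanSpace ℝ (Fin n)) : dil hl A ξ = A (l • ξ) := by
  simp [dil]

lemma wnorm_dil {n : ℕ} {l : ℝ} (hl : 0 < l) (A : SchwartzMap (EuclideanSpace ℝ (Fin n)) ℂ) :
    wnorm (dil hl.ne' A) = wnorm A := by
  have h : ∀ x, 𝓕⁻ (dil hl.ne' A) x = ((l ^ n)⁻¹ : ℝ) • 𝓕⁻ A (l⁻¹ • x) := by
    intro x
    rw [SchwartzMap.fourierInv_coe, SchwartzMap.fourierInv_coe,
      Real.fourierInv_eq, Real.fourierInv_eq]
    have := Measure.integral_comp_smul_of_nonneg volume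
      (fun v : EuclideanSpace ℝ (Fin n) => 𝐞 (inner ℝ v (l⁻¹ • x)) • A v) l (hR := hl.le)
    rw [finrank_euclideanSpace_fin] at this
    rw [← this]
    congr 1
    funext v
    rw [dil_apply, inner_smul_left, inner_smul_right]
    simp [hl.ne']
  rw [wnorm, wnorm]
  simp_rw [← SchwartzMap.fourierInv_coe, h, norm_smul]
  rw [integral_const_mul, Measure.integral_comp_inv_smul_of_nonneg volume
    (fun v => ‖(𝓕⁻ A : SchwartzMap (EuclideanSpace ℝ (Fin n)) ℂ) v‖) hl.le, finrank_euclideanSpace_fin,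
    norm_of_nonneg (by positivity), smul_eq_mul, ← mul_assoc, inv_mul_cancel₀ (by positivity), one_mul]

lemma exists_bump (n : ℕ) : ∃ β : ℝ → ℝ, Continuous β ∧ (∀ u, 0 ≤ β u) ∧
    (∀ u, 3 / 2 ≤ u → u ≤ 5 / 2 → β u = 1) ∧ (∀ u, u ≤ 1 → β u = 0) ∧ (∀ u, 3 ≤ u → β u = 0) ∧
    ∃ b : SchwartzMap (EuclideanSpace ℝ (Fin n)) ℂ, ∀ ξ, b ξ = (β (‖ξ‖ ^ 2) : ℂ) := by
  let β : ContDiffBump (2 : ℝ) := ⟨1 / 2, 1, by norm_num, by norm_num⟩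
  have h3 : ∀ u : ℝ, 3 ≤ u → β u = 0 := fun u hu => by
    refine β.zero_of_le_dist ?_
    rw [Real.dist_eq, le_abs]; left; show (1 : ℝ) ≤ _; linarith
  refine ⟨β, β.continuous, fun u => β.nonneg, fun u h1 h2 => ?_, fun u hu => ?_, h3, ?_⟩
  · refine β.one_of_mem_closedBall ?_
    rw [Metric.mem_closedBall, Real.dist_eq, abs_le]
    show -(1 / 2 : ℝ) ≤ _ ∧ _ ≤ (1 / 2 : ℝ)
    constructor <;> linarith
  · refine β.zero_of_le_dist ?_
    rw [Real.dist_eq, le_abs]; right; show (1 : ℝ) ≤ _; linarith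
  · have hc : HasCompactSupport (fun ξ : EuclideanSpace ℝ (Fin n) => (β (‖ξ‖ ^ 2) : ℂ)) := by
      refine HasCompactSupport.intro (isCompact_closedBall 0 2) fun ξ hξ => ?_
      rw [mem_closedBall_zero_iff, not_le] at hξ
      rw [h3 _ (by nlinarith)]
      simp
    have hd : ContDiff ℝ (⊤ : ℕ∞) (fun ξ : EuclideanSpace ℝ (Fin n) => (β (‖ξ‖ ^ 2) : ℂ)) := by
      refine Complex.ofRealCLM.contDiff.comp ?_
      exact β.contDiff.comp (contDiff_norm_sq ℝ)
    exact ⟨hc.toSchwartzMap hd, fun ξ => rfl⟩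

/-- Multiplication by `|ξ|^{2M}`. -/
noncomputable def npow {n : ℕ} (M : ℕ) (A : SchwartzMap (EuclideanSpace ℝ (Fin n)) ℂ) :
    SchwartzMap (EuclideanSpace ℝ (Fin n)) ℂ :=
  SchwartzMap.smulLeftCLM ℂ (fun x : EuclideanSpace ℝ (Fin n) => (‖x‖ ^ 2) ^ M) A

lemma npow_apply {n : ℕ} (M : ℕ) (A : SchwartzMap (EuclideanSpace ℝ (Fin n)) ℂ)
    (ξ : EuclideanSpace ℝ (Fin n)) : npow M A ξ = (((‖ξ‖ ^ 2) ^ M : ℝ) : ℂ) * A ξ := by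
  have : (fun x : EuclideanSpace ℝ (Fin n) => (‖x‖ ^ 2) ^ M).HasTemperateGrowth :=
    (Function.hasTemperateGrowth_norm_sq (EuclideanSpace ℝ (Fin n))).pow M
  rw [npow, SchwartzMap.smulLeftCLM_apply_apply this]
  simp

/-- The Mellin type integrand. -/
noncomputable def mker (β : ℝ → ℝ) (s : ℝ) (M : ℕ) (r u : ℝ) : ℝ :=
  u ^ (-s - 1) * (((u * r) ^ 2) ^ M * β ((u * r) ^ 2))

lemma mker_one {β : ℝ → ℝ} (hc : Continuous β) (h0 : ∀ u, 0 ≤ β u)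
    (h1 : ∀ u, 3 / 2 ≤ u → u ≤ 5 / 2 → β u = 1) (h2 : ∀ u, u ≤ 1 → β u = 0) (h3 : ∀ u, 3 ≤ u → β u = 0)
    (s : ℝ) (M : ℕ) :
    IntegrableOn (mker β s M 1) (Set.Ioi 0) ∧ 0 < ∫ u in Set.Ioi (0:ℝ), mker β s M 1 u := by
  have hi : IntegrableOn (mker β s M 1) (Set.Ioi 0) := by
    have : IntegrableOn (mker β s M 1) (Set.Icc 1 2) := by
      refine ContinuousOn.integrableOn_compact isCompact_Icc ?_
      unfold mker
      refine ContinuousOn.mul ?_ (by fun_prop)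
      refine ContinuousOn.rpow_const continuousOn_id fun x hx => Or.inl ?_
      have := hx.1
      show x ≠ 0; linarith
    refine this.of_forall_sdiff_eq_zero measurableSet_Ioi fun u hu => ?_
    obtain ⟨hu0, hu1⟩ := hu
    have hu0 : 0 < u := hu0
    rw [mker, mul_one]
    rw [Set.mem_Icc, not_and_or, not_le, not_le] at hu1
    rcases hu1 with h | h
    · rw [h2 _ (by nlinarith)]; simp
    · rw [h3 _ (by nlinarith)]; simp
  refine ⟨hi, ?_⟩
  rw [setIntegral_pos_iff_support_of_nonneg_ae _ hi]
  · refine lt_of_lt_of_le (b := volume (Set.Ioo (1.3:ℝ) 1.5)) ?_ (measure_mono fun u hu => ?_)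
    · rw [Real.volume_Ioo]; norm_num
    · obtain ⟨ha, hb⟩ := hu
      have hu0 : 0 < u := by linarith
      refine ⟨?_, hu0⟩
      rw [Function.mem_support, mker, mul_one, h1 _ (by nlinarith) (by nlinarith)]
      positivity
  · refine (ae_restrict_mem measurableSet_Ioi).mono fun u hu => ?_
    have hu : 0 < u := hu
    have := h0 ((u * 1) ^ 2)
    simp only [Pi.zero_apply, mker]
    positivity

lemma mker_scale (β : ℝ → ℝ) (s : ℝ) (M : ℕ) {r u : ℝ} (hr : 0 < r) (hu : 0 < u) :
    mker β s M r u = r ^ (s + 1) * mker β s M 1 (r * u) := by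
  rw [mker, mker, mul_rpow hr.le hu.le, mul_one, mul_comm r u, show -s - 1 = -(s + 1) by ring,
    rpow_neg hr.le]
  have : r ^ (s + 1) ≠ 0 := by positivity
  field_simp

lemma mker_integral (β : ℝ → ℝ) (s : ℝ) (M : ℕ) {r : ℝ} (hr : 0 < r) :
    ∫ u in Set.Ioi (0:ℝ), mker β s M r u = r ^ s * ∫ u in Set.Ioi (0:ℝ), mker β s M 1 u := by
  rw [setIntegral_congr_fun measurableSet_Ioi (fun u hu => mker_scale β s M hr hu), integral_const_mul,
    integral_comp_mul_left_Ioi _ _ hr, mul_zero, smul_eq_mul, ← mul_assoc, rpow_add hr, rpow_one]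
  field_simp

lemma mker_integrableOn {β : ℝ → ℝ} {s : ℝ} {M : ℕ} {r : ℝ} (hr : 0 < r)
    (h : IntegrableOn (mker β s M 1) (Set.Ioi 0)) : IntegrableOn (mker β s M r) (Set.Ioi 0) := by
  have h1 := (integrableOn_Ioi_comp_mul_left_iff (mker β s M 1) 0 hr).2 (by simpa using h)
  exact IntegrableOn.congr_fun (h1.const_mul (r ^ (s + 1))) (fun u hu => (mker_scale β s M hr hu).symm) measurableSet_Ioi

lemma ae_norm_pos {n : ℕ} (hn : 2 ≤ n) : ∀ᵐ ξ : EuclideanSpace ℝ (Fin n), 0 < ‖ξ‖ := by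
  have : Nonempty (Fin n) := ⟨⟨0, by omega⟩⟩
  have : Nontrivial (EuclideanSpace ℝ (Fin n)) := inferInstance
  have : ∀ᵐ ξ : EuclideanSpace ℝ (Fin n), ξ ≠ 0 := by
    simp [ae_iff]
  filter_upwards [this] with ξ hξ
  positivity

lemma wnorm_const_mul {n : ℕ} (c : ℝ) (A : EuclideanSpace ℝ (Fin n) → ℂ) :
    wnorm (fun ξ => (c : ℂ) * A ξ) = |c| * wnorm A := by
  have : ∀ x, 𝓕⁻ (fun ξ => (c : ℂ) * A ξ) x = (c : ℂ) * 𝓕⁻ A x := by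
    intro x
    rw [Real.fourierInv_eq, Real.fourierInv_eq, ← integral_const_mul]
    congr 1
    funext v
    rw [Circle.smul_def, Circle.smul_def, smul_eq_mul, smul_eq_mul]; ring
  simp_rw [wnorm, this, norm_mul]
  rw [integral_const_mul, Complex.norm_real, Real.norm_eq_abs]

lemma piece_bound {n : ℕ} (M : ℕ) (b Φ : SchwartzMap (EuclideanSpace ℝ (Fin n)) ℂ) {u : ℝ} (hu : 0 < u) :
    Integrable (𝓕⁻ (fun ξ => npow M b (u • ξ) * Φ ξ)) ∧
    wnorm (fun ξ => npow M b (u • ξ) * Φ ξ) ≤ wnorm (npow M b) * wnorm Φ ∧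
    wnorm (fun ξ => npow M b (u • ξ) * Φ ξ) ≤ u ^ (2 * M) * (wnorm b * wnorm (npow M Φ)) := by
  have h1 := wnorm_mul (dil hu.ne' (npow M b)) Φ
  have h2 := wnorm_mul (dil hu.ne' b) (npow M Φ)
  rw [wnorm_dil hu] at h1 h2
  simp_rw [dil_apply] at h1 h2
  refine ⟨h1.1, h1.2, ?_⟩
  have e : (fun ξ => npow M b (u • ξ) * Φ ξ) = fun ξ => ((u ^ (2 * M) : ℝ) : ℂ) * (b (u • ξ) * npow M Φ ξ) := by
    funext ξ
    rw [npow_apply, npow_apply, norm_smul, norm_of_nonneg hu.le, mul_pow, mul_pow, ← pow_mul]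
    push_cast; ring
  rw [e, wnorm_const_mul, abs_of_nonneg (by positivity)]
  exact mul_le_mul_of_nonneg_left h2.2 (by positivity)

lemma bound_integrable {s : ℝ} (hs : 0 < s) {M : ℕ} (hM : s < 2 * M) (C1 C2 : ℝ) {W : ℝ → ℝ}
    (hW : AEStronglyMeasurable W (volume.restrict (Set.Ioi 0))) (h0 : ∀ u, 0 ≤ W u)
    (h1 : ∀ u, 0 < u → W u ≤ C1) (h2 : ∀ u, 0 < u → W u ≤ u ^ (2 * M) * C2) :
    IntegrableOn (fun u => u ^ (-s - 1) * W u) (Set.Ioi 0) := by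
  have hm : AEStronglyMeasurable (fun u => u ^ (-s - 1) * W u) (volume.restrict (Set.Ioi 0)) := by
    refine AEStronglyMeasurable.mul ?_ hW
    refine Measurable.aestronglyMeasurable ?_
    fun_prop
  rw [← Set.Ioc_union_Ioi_eq_Ioi (zero_le_one (α := ℝ))]
  refine IntegrableOn.union ?_ ?_
  · have hi : IntegrableOn (fun u : ℝ => u ^ ((2 * M : ℝ) - s - 1) * C2) (Set.Ioc 0 1) := by
      have : IntervalIntegrable (fun u : ℝ => u ^ ((2 * M : ℝ) - s - 1)) volume 0 1 :=
        intervalIntegral.intervalIntegrable_rpow' (by linarith)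
      rw [intervalIntegrable_iff_integrableOn_Ioc_of_le zero_le_one] at this
      exact this.mul_const C2
    refine Integrable.mono' hi (hm.mono_measure (Measure.restrict_mono Set.Ioc_subset_Ioi_self le_rfl)) ?_
    refine (ae_restrict_mem measurableSet_Ioc).mono fun u hu => ?_
    have hu0 : 0 < u := hu.1
    rw [norm_of_nonneg (mul_nonneg (by positivity) (h0 u))]
    have e : u ^ ((2 * M : ℝ) - s - 1) = u ^ (-s - 1) * u ^ (2 * M) := by
      rw [← rpow_natCast, ← rpow_add hu0]; congr 1; push_cast; ring
    rw [e, mul_assoc]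
    exact mul_le_mul_of_nonneg_left (h2 u hu0) (by positivity)
  · have hi : IntegrableOn (fun u : ℝ => u ^ (-s - 1) * C1) (Set.Ioi 1) :=
      (integrableOn_Ioi_rpow_of_lt (by linarith) zero_lt_one).mul_const C1
    refine Integrable.mono' hi (hm.mono_measure (Measure.restrict_mono
      (Set.Ioi_subset_Ioi zero_le_one) le_rfl)) ?_
    refine (ae_restrict_mem measurableSet_Ioi).mono fun u hu => ?_
    have hu0 : 0 < u := zero_lt_one.trans hu
    rw [norm_of_nonneg (mul_nonneg (by positivity) (h0 u))]
    exact mul_le_mul_of_nonneg_left (h1 u hu0) (by positivity)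

lemma psi_integrable {n : ℕ} (hn : 2 ≤ n) {s : ℝ} (hs : 0 < s) (φ : SchwartzMap (EuclideanSpace ℝ (Fin n)) ℂ) :
    Integrable (𝓕⁻ (fun ξ : EuclideanSpace ℝ (Fin n) =>
            (((2 * π * ‖ξ‖) ^ s : ℝ) : ℂ) * 𝓕 (⇑φ) ξ)) := by
  obtain ⟨M, hM'⟩ := exists_nat_gt s
  have hM : s < 2 * M := by have : (0 : ℝ) ≤ M := M.cast_nonneg
                            linarith
  obtain ⟨β, hc, h0, h1, h2, h3, b, hb⟩ := exists_bump n
  obtain ⟨hKi, hK⟩ := mker_one hc h0 h1 h2 h3 s M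
  set K := ∫ u in Set.Ioi (0:ℝ), mker β s M 1 u with hKdef
  rw [← SchwartzMap.fourier_coe]
  set Φ : SchwartzMap (EuclideanSpace ℝ (Fin n)) ℂ := 𝓕 φ with hΦ
  have hm : ∀ (u : ℝ) (ξ : EuclideanSpace ℝ (Fin n)), 0 < u →
      ((u ^ (-s - 1) : ℝ) : ℂ) * npow M b (u • ξ) = (mker β s M ‖ξ‖ u : ℂ) := by
    intro u ξ hu
    rw [npow_apply, hb, norm_smul, norm_of_nonneg hu.le, mker]
    push_cast; ring
  -- joint measurability of the pieces
  have hmeas : Continuous (fun p : (EuclideanSpace ℝ (Fin n) × ℝ) × EuclideanSpace ℝ (Fin n) =>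
      𝐞 (inner ℝ p.2 p.1.1) • (npow M b (p.1.2 • p.2) * Φ p.2)) := by
    have c1 : Continuous (fun p : (EuclideanSpace ℝ (Fin n) × ℝ) × EuclideanSpace ℝ (Fin n) =>
      𝐞 (inner ℝ p.2 p.1.1)) := Real.continuous_fourierChar.comp (by fun_prop)
    have c2 := (npow M b).continuous
    have c3 := Φ.continuous
    fun_prop
  have hFm : StronglyMeasurable (fun p : EuclideanSpace ℝ (Fin n) × ℝ =>
      𝓕⁻ (fun ξ => npow M b (p.2 • ξ) * Φ ξ) p.1) := by
    simp_rw [Real.fourierInv_eq]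
    exact StronglyMeasurable.integral_prod_right (f := fun (p : EuclideanSpace ℝ (Fin n) × ℝ)
      (ξ : EuclideanSpace ℝ (Fin n)) => 𝐞 (inner ℝ ξ p.1) • (npow M b (p.2 • ξ) * Φ ξ))
      hmeas.stronglyMeasurable
  have hFm2 : AEStronglyMeasurable (fun p : EuclideanSpace ℝ (Fin n) × ℝ =>
      ((p.2 ^ (-s - 1) : ℝ) : ℂ) * 𝓕⁻ (fun ξ => npow M b (p.2 • ξ) * Φ ξ) p.1)
      (volume.prod (volume.restrict (Set.Ioi 0))) := by
    refine AEStronglyMeasurable.mul ?_ hFm.aestronglyMeasurable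
    refine Measurable.aestronglyMeasurable ?_
    fun_prop
  have hWm : StronglyMeasurable (fun u : ℝ => wnorm (fun ξ => npow M b (u • ξ) * Φ ξ)) := by
    have : StronglyMeasurable (fun q : ℝ × EuclideanSpace ℝ (Fin n) =>
      ‖𝓕⁻ (fun ξ => npow M b (q.1 • ξ) * Φ ξ) q.2‖) :=
      (hFm.comp_measurable measurable_swap).norm
    exact StronglyMeasurable.integral_prod_right (f := fun (u : ℝ) (x : EuclideanSpace ℝ (Fin n)) =>
      ‖𝓕⁻ (fun ξ => npow M b (u • ξ) * Φ ξ) x‖) this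
  have hjoint : Integrable (fun p : EuclideanSpace ℝ (Fin n) × ℝ =>
      ((p.2 ^ (-s - 1) : ℝ) : ℂ) * 𝓕⁻ (fun ξ => npow M b (p.2 • ξ) * Φ ξ) p.1)
      (volume.prod (volume.restrict (Set.Ioi 0))) := by
    rw [integrable_prod_iff' hFm2]
    constructor
    · refine (ae_restrict_mem measurableSet_Ioi).mono fun u hu => ?_
      exact (piece_bound M b Φ hu).1.const_mul ((u ^ (-s - 1) : ℝ) : ℂ)
    · have := bound_integrable hs hM _ _ hWm.aestronglyMeasurable (fun u => wnorm_nonneg _)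
        (fun u hu => (piece_bound M b Φ hu).2.1) (fun u hu => (piece_bound M b Φ hu).2.2)
      refine IntegrableOn.congr_fun this (fun u hu => ?_) measurableSet_Ioi
      have hu : 0 < u := hu
      simp only [norm_mul]
      rw [integral_const_mul, Complex.norm_real, norm_of_nonneg (by positivity)]
      rfl
  -- Fubini identity
  have hid : ∀ x, 𝓕⁻ (fun ξ : EuclideanSpace ℝ (Fin n) => (((2 * π * ‖ξ‖) ^ s : ℝ) : ℂ) * Φ ξ) x =
      (((2 * π) ^ s * K⁻¹ : ℝ) : ℂ) * ∫ u in Set.Ioi (0:ℝ),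
        ((u ^ (-s - 1) : ℝ) : ℂ) * 𝓕⁻ (fun ξ => npow M b (u • ξ) * Φ ξ) x := by
    intro x
    have hprod : Integrable (fun p : EuclideanSpace ℝ (Fin n) × ℝ =>
        ((p.2 ^ (-s - 1) : ℝ) : ℂ) * (𝐞 (inner ℝ p.1 x) • (npow M b (p.2 • p.1) * Φ p.1)))
        (volume.prod (volume.restrict (Set.Ioi 0))) := by
      rw [integrable_prod_iff]
      · constructor
        · filter_upwards [ae_norm_pos hn] with ξ hξ
          have := ((mker_integrableOn hξ hKi).ofReal (𝕜 := ℂ)).mul_const (𝐞 (inner ℝ ξ x) • Φ ξ)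
          refine IntegrableOn.congr_fun this (fun u hu => ?_) measurableSet_Ioi
          have := hm u ξ hu
          simp only [RCLike.ofReal_eq_complex_ofReal]
          rw [← this, Circle.smul_def, Circle.smul_def, smul_eq_mul, smul_eq_mul]
          ring
        · have := (hmult_integrable hs.le Φ).norm.const_mul (((2 * π) ^ s)⁻¹ * K)
          refine this.congr ?_
          filter_upwards [ae_norm_pos hn] with ξ hξ
          have e : ∀ u ∈ Set.Ioi (0:ℝ), ‖((u ^ (-s - 1) : ℝ) : ℂ) *
              (𝐞 (inner ℝ ξ x) • (npow M b (u • ξ) * Φ ξ))‖ = mker β s M ‖ξ‖ u * ‖Φ ξ‖ := by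
            intro u hu
            have hu : 0 < u := hu
            have h4 := hm u ξ hu
            rw [norm_mul, Circle.norm_smul, norm_mul, ← mul_assoc, ← norm_mul, h4, Complex.norm_real,
              norm_of_nonneg]
            have := h0 ((u * ‖ξ‖) ^ 2)
            unfold mker
            positivity
          rw [setIntegral_congr_fun measurableSet_Ioi e, integral_mul_const, mker_integral _ _ _ hξ,
            norm_mul, Complex.norm_real, norm_of_nonneg (by positivity), mul_rpow (by positivity) hξ.le]
          have : (2 * π) ^ s ≠ 0 := by positivity
          rw [← hKdef]
          field_simp
      · refine AEStronglyMeasurable.mul ?_ ?_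
        · refine Measurable.aestronglyMeasurable ?_
          fun_prop
        · refine Continuous.aestronglyMeasurable ?_
          have c1 : Continuous (fun p : EuclideanSpace ℝ (Fin n) × ℝ =>
            𝐞 (inner ℝ p.1 x)) := Real.continuous_fourierChar.comp (by fun_prop)
          have c2 := (npow M b).continuous
          have c3 := Φ.continuous
          fun_prop
    have e1 : ∫ u in Set.Ioi (0:ℝ),
        ((u ^ (-s - 1) : ℝ) : ℂ) * 𝓕⁻ (fun ξ => npow M b (u • ξ) * Φ ξ) x = 
        ∫ u in Set.Ioi (0:ℝ), ∫ ξ : EuclideanSpace ℝ (Fin n),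
          ((u ^ (-s - 1) : ℝ) : ℂ) * (𝐞 (inner ℝ ξ x) • (npow M b (u • ξ) * Φ ξ)) := by
      simp_rw [Real.fourierInv_eq, integral_const_mul]
    rw [e1, ← integral_integral_swap hprod, Real.fourierInv_eq, ← integral_const_mul]
    refine integral_congr_ae ?_
    filter_upwards [ae_norm_pos hn] with ξ hξ
    have e : ∀ u ∈ Set.Ioi (0:ℝ), ((u ^ (-s - 1) : ℝ) : ℂ) *
        (𝐞 (inner ℝ ξ x) • (npow M b (u • ξ) * Φ ξ)) =
        (mker β s M ‖ξ‖ u : ℂ) * (𝐞 (inner ℝ ξ x) • Φ ξ) := by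
      intro u hu
      rw [← hm u ξ hu, Circle.smul_def, Circle.smul_def, smul_eq_mul, smul_eq_mul]
      ring
    rw [setIntegral_congr_fun measurableSet_Ioi e, integral_mul_const, integral_complex_ofReal,
      mker_integral _ _ _ hξ, ← mul_assoc, ← Complex.ofReal_mul, ← hKdef]
    have : (2 * π) ^ s * K⁻¹ * (‖ξ‖ ^ s * K) = (2 * π * ‖ξ‖) ^ s := by
      rw [mul_rpow (by positivity) hξ.le]
      field_simp
    rw [this, Circle.smul_def, Circle.smul_def, smul_eq_mul, smul_eq_mul]
    ring
  have := (hjoint.integral_prod_left).const_mul (((2 * π) ^ s * K⁻¹ : ℝ) : ℂ)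
  refine this.congr (Filter.Eventually.of_forall fun x => ?_)
  exact (hid x).symm

/-- The function `P(w) w^a` with `w = 1/(1+|x|²)`. -/
noncomputable def pfun (n : ℕ) (P : Polynomial ℝ) (a : ℝ) (x : EuclideanSpace ℝ (Fin n)) : ℝ :=
  ∑ j ∈ Finset.range (P.natDegree + 1), P.coeff j * (1 + ‖x‖ ^ 2) ^ (-(a + j))

lemma pfun_eq (n : ℕ) (P : Polynomial ℝ) (a : ℝ) (x : EuclideanSpace ℝ (Fin n)) :
    pfun n P a x = P.eval (1 / (1 + ‖x‖ ^ 2)) * (1 + ‖x‖ ^ 2) ^ (-a) := by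
  have h : 0 < 1 + ‖x‖ ^ 2 := by positivity
  rw [pfun, Polynomial.eval_eq_sum_range, Finset.sum_mul]
  refine Finset.sum_congr rfl fun j _ => ?_
  rw [mul_assoc, neg_add, rpow_add h, rpow_neg h.le (j : ℝ), rpow_natCast, one_div, inv_pow]
  ring

lemma eigenFun_eq (n k : ℕ) (hn : 2 ≤ n) (s : ℝ) (x : EuclideanSpace ℝ (Fin n)) :
    eigenFun n k s x = pfun n (geg n k) (((n : ℝ) - s) / 2) x := by
  have h : 0 < 1 + ‖x‖ ^ 2 := by positivity
  rw [pfun_eq, eigenFun, ← geg_eval n hn]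
  congr 2
  field_simp
  ring

lemma eigenFun_mul_eq (n k : ℕ) (hn : 2 ≤ n) (s : ℝ) (x : EuclideanSpace ℝ (Fin n)) :
    eigenFun n k s x * (1 + ‖x‖ ^ 2) ^ (-s) = pfun n (geg n k) (((n : ℝ) + s) / 2) x := by
  have h : 0 < 1 + ‖x‖ ^ 2 := by positivity
  rw [eigenFun_eq n k hn, pfun_eq, pfun_eq, mul_assoc, ← rpow_add h]
  congr 2
  ring

lemma wpow_integrable {n : ℕ} {g : EuclideanSpace ℝ (Fin n) → ℂ} (hg : Integrable g) {a : ℝ} (ha : 0 < a) :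
    Integrable (fun x => (((1 + ‖x‖ ^ 2) ^ (-a) : ℝ) : ℂ) * g x) := by
  refine hg.bdd_mul (c := 1) ?_ ?_
  · refine Measurable.aestronglyMeasurable ?_
    fun_prop
  · refine Filter.Eventually.of_forall fun x => ?_
    rw [Complex.norm_real, norm_of_nonneg (by positivity)]
    exact rpow_le_one_of_one_le_of_nonpos (by nlinarith [sq_nonneg ‖x‖]) (by linarith)

lemma pfun_mul_eq {n : ℕ} (P : Polynomial ℝ) (a : ℝ) (g : EuclideanSpace ℝ (Fin n) → ℂ)
    (x : EuclideanSpace ℝ (Fin n)) : (pfun n P a x : ℂ) * g x =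
      ∑ j ∈ Finset.range (P.natDegree + 1), (P.coeff j : ℂ) *
        ((((1 + ‖x‖ ^ 2) ^ (-(a + j)) : ℝ) : ℂ) * g x) := by
  rw [pfun, Complex.ofReal_sum, Finset.sum_mul]
  refine Finset.sum_congr rfl fun j _ => ?_
  push_cast; ring

lemma pfun_integrable {n : ℕ} (P : Polynomial ℝ) {g : EuclideanSpace ℝ (Fin n) → ℂ} (hg : Integrable g)
    {a : ℝ} (ha : 0 < a) : Integrable (fun x => (pfun n P a x : ℂ) * g x) := by
  simp_rw [pfun_mul_eq]
  exact integrable_finsetSum _ fun j _ => (wpow_integrable hg (by positivity)).const_mul _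

lemma profL_eq (n : ℕ) (a r : ℝ) (P : Polynomial ℝ) : profL n a r P =
    ∑ j ∈ Finset.range (P.natDegree + 1), P.coeff j * (besI (a + j - n / 2) r / Gamma (a + j)) := by
  conv_lhs => rw [P.as_sum_range, map_sum]
  exact Finset.sum_congr rfl fun j _ => profL_monomial _ _ _ _ _

lemma pfun_integral {n : ℕ} (hn : 2 ≤ n) (P : Polynomial ℝ) {h : EuclideanSpace ℝ (Fin n) → ℂ}
    (hh : Integrable h) (hF : Integrable (𝓕⁻ h)) {a : ℝ} (ha : 0 < a)
    (hb : ∀ j : ℕ, Integrable (fun ξ => (besI (a + j - n / 2) (π * ‖ξ‖) : ℂ) * h ξ)) :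
    ∫ x, (pfun n P a x : ℂ) * 𝓕⁻ h x =
      ((π ^ ((n : ℝ) / 2) : ℝ) : ℂ) * ∫ ξ, (profL n a (π * ‖ξ‖) P : ℂ) * h ξ := by
  simp_rw [pfun_mul_eq]
  rw [integral_finsetSum _ fun j _ => (wpow_integrable hF (by positivity)).const_mul _]
  have e : ∀ ξ : EuclideanSpace ℝ (Fin n), (profL n a (π * ‖ξ‖) P : ℂ) * h ξ =
      ∑ j ∈ Finset.range (P.natDegree + 1), ((P.coeff j / Gamma (a + j) : ℝ) : ℂ) *
        ((besI (a + j - n / 2) (π * ‖ξ‖) : ℂ) * h ξ) := by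
    intro ξ
    rw [profL_eq, Complex.ofReal_sum, Finset.sum_mul]
    refine Finset.sum_congr rfl fun j _ => ?_
    push_cast; ring
  simp_rw [e]
  rw [integral_finsetSum _ fun j _ => (hb j).const_mul _, Finset.mul_sum]
  refine Finset.sum_congr rfl fun j _ => ?_
  rw [integral_const_mul, integral_const_mul, lemmaM hn hh hF (by positivity) (hb j)]
  push_cast; ring

lemma ae_pos_norm {n : ℕ} (hn : 2 ≤ n) : ∀ᵐ ξ : EuclideanSpace ℝ (Fin n), 0 < π * ‖ξ‖ := by
  have : Nonempty (Fin n) := ⟨⟨0, by omega⟩⟩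
  have : Nontrivial (EuclideanSpace ℝ (Fin n)) := inferInstance
  have : ∀ᵐ ξ : EuclideanSpace ℝ (Fin n), ξ ≠ 0 := by
    simp [ae_iff]
  filter_upwards [this] with ξ hξ
  positivity

lemma besI_comp_meas (n : ℕ) (ν : ℝ) :
    AEStronglyMeasurable (fun ξ : EuclideanSpace ℝ (Fin n) => (besI ν (π * ‖ξ‖) : ℂ)) := by
  refine Complex.continuous_ofReal.comp_aestronglyMeasurable ?_
  refine StronglyMeasurable.aestronglyMeasurable ?_
  unfold besI
  refine StronglyMeasurable.integral_prod_right (f := fun (ξ : EuclideanSpace ℝ (Fin n)) (t : ℝ) =>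
    t ^ (ν - 1) * exp (-t - (π * ‖ξ‖) ^ 2 / t)) ?_
  refine Measurable.stronglyMeasurable ?_
  fun_prop

/-- Eigenfunctions of the fractional Laplacian on `ℝⁿ` (Proposition A.1, weak
Fourier formulation). -/
theorem fractional_laplacian_eigenfunctions (n k : ℕ) (hn : 2 ≤ n) (s lamk : ℝ)
    (hs : s ∈ Set.Ioo (0 : ℝ) (n : ℝ))
    (hlamk : lamk = 2 ^ s * Gamma ((k : ℝ) + ((n : ℝ) + s) / 2) /
      Gamma ((k : ℝ) + ((n : ℝ) - s) / 2)) :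
    ∀ φ : SchwartzMap (EuclideanSpace ℝ (Fin n)) ℂ,
      Integrable (fun x : EuclideanSpace ℝ (Fin n) =>
        (eigenFun n k s x : ℂ) *
          𝓕⁻ (fun ξ : EuclideanSpace ℝ (Fin n) =>
            (((2 * π * ‖ξ‖) ^ s : ℝ) : ℂ) * 𝓕 (⇑φ) ξ) x) volume ∧
      Integrable (fun x : EuclideanSpace ℝ (Fin n) =>
        (eigenFun n k s x : ℂ) * (((1 + ‖x‖ ^ 2) ^ (-s) : ℝ) : ℂ) * φ x) volume ∧
      ∫ x : EuclideanSpace ℝ (Fin n),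
          (eigenFun n k s x : ℂ) *
            𝓕⁻ (fun ξ : EuclideanSpace ℝ (Fin n) =>
              (((2 * π * ‖ξ‖) ^ s : ℝ) : ℂ) * 𝓕 (⇑φ) ξ) x
        = (lamk : ℂ) *
          ∫ x : EuclideanSpace ℝ (Fin n),
            (eigenFun n k s x : ℂ) * (((1 + ‖x‖ ^ 2) ^ (-s) : ℝ) : ℂ) * φ x := by
  intro φ
  obtain ⟨hs0, hsn⟩ := hs
  have hn0 : (0 : ℝ) < n := hs0.trans hsn
  have hμ : 0 < ((n : ℝ) - s) / 2 := by linarith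
  have hμ' : 0 < ((n : ℝ) + s) / 2 := by linarith
  have hψ := psi_integrable hn hs0 φ
  have hφi := φ.integrable (μ := volume)
  have hlam : lamk = lam n s k := hlamk
  simp_rw [← Complex.ofReal_mul, eigenFun_mul_eq n k hn, eigenFun_eq n k hn]
  refine ⟨pfun_integrable _ hψ hμ, pfun_integrable _ hφi hμ', ?_⟩
  have hFc : 𝓕 (⇑φ) = ⇑(𝓕 φ : SchwartzMap (EuclideanSpace ℝ (Fin n)) ℂ) := (SchwartzMap.fourier_coe φ).symm
  have hFi : Integrable (𝓕 (⇑φ)) := by rw [hFc]; exact (𝓕 φ : SchwartzMap (EuclideanSpace ℝ (Fin n)) ℂ).integrable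
  have hhi : Integrable (fun ξ : EuclideanSpace ℝ (Fin n) =>
            (((2 * π * ‖ξ‖) ^ s : ℝ) : ℂ) * 𝓕 (⇑φ) ξ) := by
    rw [hFc]; exact hmult_integrable hs0.le _
  have hinv : 𝓕⁻ (𝓕 (⇑φ)) = φ := by
    exact φ.continuous.fourierInv_fourier_eq hφi hFi
  have hpos := ae_pos_norm hn
  rw [pfun_integral hn _ hhi hψ hμ]
  · have := pfun_integral hn (geg n k) hFi (by rw [hinv]; exact hφi) hμ' ?_
    · rw [hinv] at this
      rw [this, mul_left_comm]
      congr 1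
      rw [← integral_const_mul]
      refine integral_congr_ae ?_
      filter_upwards [hpos] with ξ hξ
      have := prof_eq n hn hs0 hsn k _ hξ
      rw [← mul_assoc, ← mul_assoc, ← Complex.ofReal_mul, ← Complex.ofReal_mul, hlam, ← this]
      congr 2
      rw [← mul_assoc 2 π, mul_comm]
    · intro j
      refine hFi.bdd_mul (c := Gamma (((n : ℝ) + s) / 2 + j - n / 2)) (besI_comp_meas _ _) ?_
      filter_upwards [hpos] with ξ hξ
      rw [Complex.norm_real, norm_of_nonneg (besI_nonneg _ _)]
      refine besI_le_Gamma ?_ hξ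
      have : (0 : ℝ) ≤ j := j.cast_nonneg
      linarith
  · intro j
    obtain ⟨C, hC⟩ := besI_bound j hs0
    have : (fun ξ : EuclideanSpace ℝ (Fin n) => (besI (((n : ℝ) - s) / 2 + j - n / 2) (π * ‖ξ‖) : ℂ) *
        ((((2 * π * ‖ξ‖) ^ s : ℝ) : ℂ) * 𝓕 (⇑φ) ξ)) = fun ξ =>
        ((besI (((n : ℝ) - s) / 2 + j - n / 2) (π * ‖ξ‖) : ℂ) * (((2 * π * ‖ξ‖) ^ s : ℝ) : ℂ)) * 𝓕 (⇑φ) ξ := by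
      funext ξ; ring
    rw [this]
    refine hFi.bdd_mul (c := 2 ^ s * C) ?_ ?_
    · refine (besI_comp_meas _ _).mul ?_
      refine Measurable.aestronglyMeasurable ?_
      fun_prop
    · filter_upwards [hpos] with ξ hξ
      rw [← Complex.ofReal_mul, Complex.norm_real, norm_of_nonneg
        (mul_nonneg (besI_nonneg _ _) (by positivity)),
        show 2 * π * ‖ξ‖ = 2 * (π * ‖ξ‖) by ring, mul_rpow (by norm_num) hξ.le]
      have := hC _ hξ
      rw [show ((n : ℝ) - s) / 2 + j - n / 2 = j - s / 2 by ring]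
      have h2 : (0 : ℝ) < 2 ^ s := by positivity
      nlinarith
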